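/- Let G be a finite group, A an abelian subgroup of G of index 2, and b an element of G not in A. Then the set B = {(b·a·b⁻¹)·a⁻¹ : a ∈ A} is a subgroup of G, and it equals the commutator (derived) subgroup of G. -/

import Mathlib

/-!
Write `[b, A]` for `{⁅b, a⁆ : a ∈ A}`, where `A` is an abelian normal subgroup and `G = A⟨b⟩`. Since
`⁅b, a⁆ = (b a b⁻¹) / a` is a quotient of two endomorphisms of the abelian group `A`, the set
`[b, A]` is a subgroup of `A`. It is centralized by `A` and stable under conjugation by `b`, hence
normal in `G`. Modulo `[b, A]` the generators `A ∪ {b}` commute with each other, so the quotient is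
abelian and `[b, A]` contains every commutator. A subgroup of index 2 is normal and maximal, so
`G = A⟨b⟩` for every `b ∉ A`.
-/

section

open Subgroup hiding commutator
open scoped commutatorElement IsMulCommutative

variable {G : Type*} [Group G]

theorem isCoatom_of_index_prime {H : Subgroup G} (hH : H.index.Prime) : IsCoatom H := by
  have : H.FiniteIndex := ⟨hH.ne_zero⟩
  refine ⟨fun h => hH.ne_one (index_eq_one.mpr h), fun K hHK => index_eq_one.mp ?_⟩
  exact (hH.eq_one_or_self_of_dvd _ (index_dvd_of_le hHK.le)).resolve_right
    (index_strictAnti hHK).ne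

theorem sup_zpowers_eq_top_of_isCoatom {H : Subgroup G} (hH : IsCoatom H) {b : G} (hb : b ∉ H) :
    H ⊔ zpowers b = ⊤ :=
  hH.2 _ (left_lt_sup.mpr (by rwa [zpowers_le]))

theorem commutator_le_of_closure_eq_top {s : Set G} (hs : closure s = ⊤) {N : Subgroup G}
    [N.Normal] (hN : ∀ x ∈ s, ∀ y ∈ s, ⁅x, y⁆ ∈ N) : commutator G ≤ N := by
  rw [← Normal.quotient_commutative_iff_commutator_le]
  have hcomm : IsMulCommutative (closure (QuotientGroup.mk' N '' s)) := by
    refine isMulCommutative_closure ?_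
    rintro _ ⟨x, hx, rfl⟩ _ ⟨y, hy, rfl⟩
    rw [← commutatorElement_eq_one_iff_mul_comm, ← map_commutatorElement]
    exact (QuotientGroup.eq_one_iff _).mpr (hN x hx y hy)
  have htop : closure (QuotientGroup.mk' N '' s) = ⊤ := by
    rw [← MonoidHom.map_closure, hs, map_top_of_surjective _ (QuotientGroup.mk'_surjective N)]
  rw [htop] at hcomm
  exact .of_comm fun x y => setLike_mul_comm (s := (⊤ : Subgroup (G ⧸ N))) trivial trivial

variable (A : Subgroup G) [A.Normal] [IsMulCommutative A] (b : G)

/-- The homomorphism `a ↦ ⁅b, a⁆` on an abelian normal subgroup `A`, written as the quotient of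
conjugation by `b` and the identity of `A` so that multiplicativity needs no computation. Its range
is the subgroup `[b, A]`. -/
def commutatorHom : A →* G :=
  A.subtype.comp ((MulAut.conjNormal b).toMonoidHom / MonoidHom.id A)

theorem commutatorHom_apply (a : A) : commutatorHom A b a = ⁅b, (a : G)⁆ :=
  div_eq_mul_inv (b * a * b⁻¹) (a : G)

theorem range_commutatorHom_le : (commutatorHom A b).range ≤ A := by
  rintro _ ⟨a, rfl⟩
  exact SetLike.coe_mem _

theorem conj_comp_commutatorHom :
    (MulAut.conj b).toMonoidHom.comp (commutatorHom A b) =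
      (commutatorHom A b).comp (MulAut.conjNormal b).toMonoidHom := by
  ext a
  simp [commutatorHom_apply]

theorem mem_normalizer_range_commutatorHom :
    b ∈ normalizer ((commutatorHom A b).range : Set G) := by
  have hsurj : (MulAut.conjNormal b : MulAut A).toMonoidHom.range = ⊤ :=
    MonoidHom.range_eq_top.mpr (MulAut.conjNormal b).surjective
  rw [mem_normalizer_iff_map_conj_eq]
  calc (commutatorHom A b).range.map (MulAut.conj b).toMonoidHom
      = ((commutatorHom A b).comp (MulAut.conjNormal b).toMonoidHom).range := by
        rw [MonoidHom.map_range, conj_comp_commutatorHom]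
    _ = (commutatorHom A b).range := by
        rw [MonoidHom.range_comp, hsurj, ← MonoidHom.range_eq_map]

variable {A b}

theorem normal_range_commutatorHom (hAb : A ⊔ zpowers b = ⊤) :
    (commutatorHom A b).range.Normal := by
  rw [← normalizer_eq_top_iff, eq_top_iff, ← hAb, sup_le_iff, zpowers_le]
  exact ⟨((le_centralizer A).trans (centralizer_le (range_commutatorHom_le A b))).trans
      (centralizer_le_normalizer _),
    mem_normalizer_range_commutatorHom A b⟩

theorem range_commutatorHom_eq_commutator (hAb : A ⊔ zpowers b = ⊤) :
    (commutatorHom A b).range = commutator G := by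
  have hnormal := normal_range_commutatorHom hAb
  have hgen : closure (insert b (A : Set G)) = ⊤ := by
    rw [Set.insert_eq, Subgroup.closure_union, closure_eq, ← zpowers_eq_closure, sup_comm, hAb]
  have hmem (a : G) (ha : a ∈ A) : ⁅b, a⁆ ∈ (commutatorHom A b).range :=
    ⟨⟨a, ha⟩, commutatorHom_apply A b ⟨a, ha⟩⟩
  apply le_antisymm
  · rintro _ ⟨a, rfl⟩
    rw [commutatorHom_apply]
    exact commutator_mem_commutator (mem_top b) (mem_top (a : G))
  · refine commutator_le_of_closure_eq_top hgen ?_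
    rintro x (rfl | hx) y (rfl | hy)
    · simp
    · exact hmem y hy
    · rw [← commutatorElement_inv]
      exact inv_mem (hmem x hx)
    · rw [commutatorElement_eq_one_iff_mul_comm.mpr (setLike_mul_comm hx hy)]
      exact one_mem _

theorem stmt_3_general (hAb : A ⊔ zpowers b = ⊤) :
    (commutator G : Set G) = {x : G | ∃ a ∈ A, b * a * b⁻¹ * a⁻¹ = x} := by
  ext x
  simp [← range_commutatorHom_eq_commutator hAb, commutatorHom_apply, commutatorElement_def]

end

/-- Let `G` be a finite group, `A` an abelian subgroup of `G` of index 2, and `b ∈ G \ A`.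
Then the set `B = {(b * a * b⁻¹) * a⁻¹ : a ∈ A}` is a subgroup of `G`, and it equals
the commutator (derived) subgroup of `G`. -/
theorem stmt_3 {G : Type*} [Group G] [Finite G] (A : Subgroup G)
    (hcomm : ∀ x ∈ A, ∀ y ∈ A, x * y = y * x) (hidx : A.index = 2)
    (b : G) (hb : b ∉ A)
    (B : Set G) (hB : B = {x : G | ∃ a ∈ A, b * a * b⁻¹ * a⁻¹ = x}) :
    ∃ H : Subgroup G, (H : Set G) = B ∧ H = commutator G := by
  have := Subgroup.normal_of_index_eq_two hidx
  have : IsMulCommutative A := .of_setLike_mul_comm hcomm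
  have hA : IsCoatom A := isCoatom_of_index_prime (hidx ▸ Nat.prime_two)
  exact ⟨commutator G, hB ▸ stmt_3_general (sup_zpowers_eq_top_of_isCoatom hA hb), rfl⟩
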